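/- Let λ ∈ ℝ. The function −f_λ(x), where f_λ(x) = [ψ'(x)]² + ψ''(x) − (x² + λx + 12)/(12x⁴(x+1)²), is completely monotonic on (0,∞) if and only if λ ≥ 4. -/

import Mathlib

/-- The digamma function `ψ(x) = Γ'(x)/Γ(x)`. -/
noncomputable def digamma (x : ℝ) : ℝ := deriv Real.Gamma x / Real.Gamma x

/-- A function is completely monotonic on a set `s` if it has derivatives of all
orders there and `(-1)^n f^(n)(x) ≥ 0` for all `x ∈ s` and all `n ≥ 0`. -/
def CompletelyMonotonicOn (f : ℝ → ℝ) (s : Set ℝ) : Prop :=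
  ContDiffOn ℝ (⊤ : ℕ∞) f s ∧
    ∀ n : ℕ, ∀ x ∈ s, 0 ≤ (-1 : ℝ) ^ n * iteratedDerivWithin n f s x

/-!
If `F → 0` at infinity, then `F x = ∑' k, (F (x + k) - F (x + k + 1))`, so `F` is completely
monotonic as soon as `F x - F (x + 1)` is: sums of shifts of completely monotonic functions may be
differentiated termwise. The recurrences of `ψ'` and `ψ''` turn the first difference of `-f_λ` into
`2 / x²` times a function linear in `ψ'`, whose first difference is rational. For `λ = 4` that
rational function is visibly completely monotonic, and two applications of the principle give the
claim for `-f_4`; for `λ > 4` a completely monotonic rational function is added. For `λ < 4` the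
rational function behaves like `20 (λ - 4) / (24 x⁵)` at infinity, and summing twice makes `-f_λ`
negative there.
-/

open Set Filter Topology

theorem add_natCast_mem_Ioi {a x : ℝ} (hx : x ∈ Ioi a) (k : ℕ) : x + k ∈ Ioi a :=
  (mem_Ioi.1 hx).trans_le (le_add_of_nonneg_right k.cast_nonneg)

namespace CompletelyMonotonicOn

variable {f g : ℝ → ℝ} {s : Set ℝ} {a c x : ℝ}

theorem nonneg (hf : CompletelyMonotonicOn f s) (hx : x ∈ s) : 0 ≤ f x := by
  simpa using hf.2 0 x hx

theorem congr (hf : CompletelyMonotonicOn f s) (hgf : EqOn g f s) : CompletelyMonotonicOn g s :=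
  ⟨hf.1.congr hgf, fun n x hx ↦ (iteratedDerivWithin_congr hgf hx).symm ▸ hf.2 n x hx⟩

protected theorem const (hc : 0 ≤ c) : CompletelyMonotonicOn (fun _ ↦ c) s := by
  refine ⟨contDiffOn_const, fun n x _ ↦ ?_⟩
  rw [iteratedDerivWithin_const]
  split_ifs with hn
  · simpa [hn] using hc
  · simp

theorem const_mul (hf : CompletelyMonotonicOn f s) (hc : 0 ≤ c) :
    CompletelyMonotonicOn (fun x ↦ c * f x) s := by
  refine ⟨contDiffOn_const.mul hf.1, fun n x hx ↦ ?_⟩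
  rw [iteratedDerivWithin_const_mul_field, mul_left_comm]
  exact mul_nonneg hc (hf.2 n x hx)

theorem add (hs : UniqueDiffOn ℝ s) (hf : CompletelyMonotonicOn f s)
    (hg : CompletelyMonotonicOn g s) : CompletelyMonotonicOn (fun x ↦ f x + g x) s := by
  refine ⟨hf.1.add hg.1, fun n x hx ↦ ?_⟩
  rw [iteratedDerivWithin_fun_add hx hs (contDiffOn_infty.1 hf.1 n x hx)
    (contDiffOn_infty.1 hg.1 n x hx), mul_add]
  exact add_nonneg (hf.2 n x hx) (hg.2 n x hx)

theorem mul (hs : UniqueDiffOn ℝ s) (hf : CompletelyMonotonicOn f s)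
    (hg : CompletelyMonotonicOn g s) : CompletelyMonotonicOn (fun x ↦ f x * g x) s := by
  refine ⟨hf.1.mul hg.1, fun n x hx ↦ ?_⟩
  have leibniz := iteratedDerivWithin_mul hx hs (contDiffOn_infty.1 hf.1 n x hx)
    (contDiffOn_infty.1 hg.1 n x hx)
  rw [show (fun x ↦ f x * g x) = f * g from rfl, leibniz, Finset.mul_sum]
  refine Finset.sum_nonneg fun i hi ↦ ?_
  have hsign : (-1 : ℝ) ^ n = (-1) ^ i * (-1) ^ (n - i) := by
    rw [← pow_add, Nat.add_sub_cancel' (Finset.mem_range_succ_iff.1 hi)]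
  calc (0 : ℝ) ≤ n.choose i * ((-1) ^ i * iteratedDerivWithin i f s x) *
        ((-1) ^ (n - i) * iteratedDerivWithin (n - i) g s x) :=
        mul_nonneg (mul_nonneg (Nat.cast_nonneg _) (hf.2 i x hx)) (hg.2 (n - i) x hx)
    _ = _ := by rw [hsign]; ring

theorem pow (hs : UniqueDiffOn ℝ s) (hf : CompletelyMonotonicOn f s) (n : ℕ) :
    CompletelyMonotonicOn (fun x ↦ f x ^ n) s := by
  induction n with
  | zero => simpa only [pow_zero] using CompletelyMonotonicOn.const zero_le_one
  | succ n ih => simpa only [pow_succ] using ih.mul hs hf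

theorem differentiableAt (hs : IsOpen s) (hf : CompletelyMonotonicOn f s) (hx : x ∈ s) :
    DifferentiableAt ℝ f x :=
  (hf.1.contDiffAt (hs.mem_nhds hx)).differentiableAt (by simp)

theorem neg_deriv (hs : IsOpen s) (hf : CompletelyMonotonicOn f s) :
    CompletelyMonotonicOn (fun x ↦ -deriv f x) s := by
  refine ⟨(hf.1.deriv_of_isOpen hs (by simp)).neg, fun n x hx ↦ ?_⟩
  have h := hf.2 (n + 1) x hx
  rw [iteratedDerivWithin_of_isOpen hs hx, iteratedDeriv_succ'] at h
  rw [iteratedDerivWithin_of_isOpen hs hx, iteratedDeriv_fun_neg]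
  linear_combination h

theorem antitoneOn (hs : IsOpen s) (hconv : Convex ℝ s) (hf : CompletelyMonotonicOn f s) :
    AntitoneOn f s := by
  refine antitoneOn_of_deriv_nonpos hconv hf.1.continuousOn
    (hf.1.differentiableOn (by simp) |>.mono interior_subset) fun x hx ↦ ?_
  simpa using (hf.neg_deriv hs).nonneg (interior_subset hx)

theorem convexOn (hs : IsOpen s) (hconv : Convex ℝ s) (hf : CompletelyMonotonicOn f s) :
    ConvexOn ℝ s f := by
  refine MonotoneOn.convexOn_of_deriv hconv hf.1.continuousOn
    (hf.1.differentiableOn (by simp) |>.mono interior_subset) ?_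
  simpa only [neg_neg] using ((hf.neg_deriv hs).antitoneOn hs hconv).neg.mono interior_subset

theorem of_neg_deriv_closed (hs : IsOpen s) {C : (ℝ → ℝ) → Prop}
    (hnonneg : ∀ f, C f → ∀ x ∈ s, 0 ≤ f x) (hdiff : ∀ f, C f → DifferentiableOn ℝ f s)
    (hderiv : ∀ f, C f → C (fun x ↦ -deriv f x)) (hf : C f) : CompletelyMonotonicOn f s := by
  refine ⟨contDiffOn_infty.2 fun n ↦ ?_, fun n x hx ↦ ?_⟩
  · induction n generalizing f with
    | zero => exact contDiffOn_zero.2 (hdiff f hf).continuousOn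
    | succ n ih =>
      refine (contDiffOn_succ_iff_deriv_of_isOpen (n := n) hs).2 ⟨hdiff f hf, by simp, ?_⟩
      simpa using (ih (hderiv f hf)).neg
  · rw [iteratedDerivWithin_of_isOpen hs hx]
    induction n generalizing f with
    | zero => simpa using hnonneg f hf x hx
    | succ n ih =>
      have h := ih (hderiv f hf)
      rw [iteratedDeriv_fun_neg] at h
      rw [iteratedDeriv_succ']
      linear_combination h

theorem inv_add (hs : IsOpen s) (hpos : ∀ x ∈ s, 0 < x + a) :
    CompletelyMonotonicOn (fun x ↦ (x + a)⁻¹) s := by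
  refine ⟨ContDiffOn.inv (by fun_prop) fun x hx ↦ (hpos x hx).ne', fun n x hx ↦ ?_⟩
  have hderiv : iteratedDeriv n (fun x ↦ (x + a)⁻¹) x =
      (-1) ^ n * (n.factorial * (x + a) ^ (-1 - n : ℤ)) := by
    simpa [iteratedDeriv_eq_iterate, mul_assoc] using congrFun (iter_deriv_inv_linear n 1 a) x
  have := hpos x hx
  rw [iteratedDerivWithin_of_isOpen hs hx, hderiv, ← mul_assoc, ← mul_pow]
  norm_num
  positivity

theorem inv_add_Ioi (ha : 0 ≤ a) : CompletelyMonotonicOn (fun x ↦ (x + a)⁻¹) (Ioi 0) :=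
  inv_add isOpen_Ioi fun _ hx ↦ add_pos_of_pos_of_nonneg hx ha

theorem inv_Ioi : CompletelyMonotonicOn (fun x ↦ x⁻¹) (Ioi 0) := by
  simpa using inv_add_Ioi le_rfl

theorem summable_deriv_shift (hf : CompletelyMonotonicOn f (Ioi a))
    (hsum : ∀ x ∈ Ioi a, Summable fun k : ℕ ↦ f (x + k)) (hx : x ∈ Ioi a) :
    Summable fun k : ℕ ↦ deriv f (x + k) := by
  obtain ⟨y, hay, hyx⟩ := exists_between (mem_Ioi.1 hx)
  rw [← summable_neg_iff]
  refine .of_nonneg_of_le (fun k ↦ (hf.neg_deriv isOpen_Ioi).nonneg (add_natCast_mem_Ioi hx k))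
    (fun k ↦ ?_) (((hsum y hay).sub (hsum x hx)).div_const (x - y))
  have hyk := add_natCast_mem_Ioi hay k
  have hxk := add_natCast_mem_Ioi hx k
  have hslope := (hf.convexOn isOpen_Ioi (convex_Ioi a)).slope_le_deriv hyk hxk (by gcongr)
    (hf.differentiableAt isOpen_Ioi hxk)
  rw [slope_def_field, add_sub_add_right_eq_sub] at hslope
  linear_combination hslope

theorem hasDerivAt_tsum_shift (hf : CompletelyMonotonicOn f (Ioi a))
    (hsum : ∀ x ∈ Ioi a, Summable fun k : ℕ ↦ f (x + k)) (hx : x ∈ Ioi a) :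
    HasDerivAt (fun y ↦ ∑' k : ℕ, f (y + k)) (∑' k : ℕ, deriv f (x + k)) x := by
  obtain ⟨y, hay, hyx⟩ := exists_between (mem_Ioi.1 hx)
  have hneg := hf.neg_deriv isOpen_Ioi
  refine hasDerivAt_tsum_of_isPreconnected (g := fun (k : ℕ) z ↦ f (z + k))
    (g' := fun k z ↦ deriv f (z + k)) (hf.summable_deriv_shift hsum hay).neg isOpen_Ioi
    isPreconnected_Ioi (fun k z hz ↦ ?_) (fun k z hz ↦ ?_) (mem_Ioi.2 hyx) (hsum x hx) hyx
  all_goals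
    have hzk := add_natCast_mem_Ioi (hay.trans hz) k
  · exact (hf.differentiableAt isOpen_Ioi hzk).hasDerivAt.comp_add_const z k
  · rw [← norm_neg, Real.norm_of_nonneg (hneg.nonneg hzk)]
    exact hneg.antitoneOn isOpen_Ioi (convex_Ioi a) (add_natCast_mem_Ioi hay k) hzk
      (add_le_add_left (mem_Ioi.1 hz).le _)

theorem tsum_shift (hf : CompletelyMonotonicOn f (Ioi a))
    (hsum : ∀ x ∈ Ioi a, Summable fun k : ℕ ↦ f (x + k)) :
    CompletelyMonotonicOn (fun x ↦ ∑' k : ℕ, f (x + k)) (Ioi a) := by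
  refine of_neg_deriv_closed isOpen_Ioi (C := fun F ↦ ∃ h, CompletelyMonotonicOn h (Ioi a) ∧
    (∀ x ∈ Ioi a, Summable fun k : ℕ ↦ h (x + k)) ∧ EqOn F (fun x ↦ ∑' k : ℕ, h (x + k)) (Ioi a))
    ?_ ?_ ?_ ⟨f, hf, hsum, eqOn_refl _ _⟩ <;> rintro F ⟨h, hh, hhsum, hF⟩
  · intro x hx
    rw [hF hx]
    exact tsum_nonneg fun k ↦ hh.nonneg (add_natCast_mem_Ioi hx k)
  · exact DifferentiableOn.congr (fun x hx ↦
      (hh.hasDerivAt_tsum_shift hhsum hx).differentiableAt.differentiableWithinAt) hF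
  · refine ⟨_, hh.neg_deriv isOpen_Ioi, fun x hx ↦ (hh.summable_deriv_shift hhsum hx).neg,
      fun x hx ↦ ?_⟩
    change -deriv F x = ∑' k : ℕ, -deriv h (x + k)
    rw [(hF.eventuallyEq_of_mem (Ioi_mem_nhds hx)).deriv_eq,
      (hh.hasDerivAt_tsum_shift hhsum hx).deriv, tsum_neg]

theorem of_sub_shift (hlim : Tendsto f atTop (𝓝 0))
    (hsub : CompletelyMonotonicOn (fun x ↦ f x - f (x + 1)) (Ioi a)) :
    CompletelyMonotonicOn f (Ioi a) := by
  have hasSum {x : ℝ} (hx : x ∈ Ioi a) :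
      HasSum (fun k : ℕ ↦ f (x + k) - f (x + k + 1)) (f x) := by
    refine (hasSum_iff_tendsto_nat_of_nonneg
      (fun k ↦ hsub.nonneg (add_natCast_mem_Ioi hx k)) _).2 ?_
    have htel (n : ℕ) : ∑ k ∈ Finset.range n, (f (x + k) - f (x + k + 1)) = f x - f (x + n) := by
      simpa [add_assoc] using Finset.sum_range_sub' (fun k : ℕ ↦ f (x + k)) n
    simp only [htel]
    simpa using (hlim.comp
      (tendsto_atTop_add_const_left _ x tendsto_natCast_atTop_atTop)).const_sub (f x)
  exact (hsub.tsum_shift fun x hx ↦ (hasSum hx).summable).congr fun x hx ↦ (hasSum hx).tsum_eq.symm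

end CompletelyMonotonicOn

theorem tendsto_deriv_atTop_of_convexOn {f : ℝ → ℝ} {a c : ℝ} (hf : ConvexOn ℝ (Ioi a) f)
    (hdiff : DifferentiableOn ℝ f (Ioi a))
    (hlim : Tendsto (fun x ↦ f (x + 1) - f x) atTop (𝓝 c)) : Tendsto (deriv f) atTop (𝓝 c) := by
  have hlim' : Tendsto (fun x ↦ f x - f (x - 1)) atTop (𝓝 c) := by
    simpa [Function.comp_def, ← sub_eq_add_neg] using
      hlim.comp (tendsto_atTop_add_const_right _ (-1) tendsto_id)
  have hdiffAt {x : ℝ} (hx : a < x) : DifferentiableAt ℝ f x :=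
    hdiff.differentiableAt (Ioi_mem_nhds hx)
  refine tendsto_of_tendsto_of_tendsto_of_le_of_le' hlim' hlim ?_ ?_
  · filter_upwards [eventually_gt_atTop (a + 1)] with x hx
    have h := hf.slope_le_deriv (x := x - 1) (y := x) (by simp; linarith) (by simp; linarith)
      (by linarith) (hdiffAt (by linarith))
    simpa [slope_def_field] using h
  · filter_upwards [eventually_gt_atTop a] with x hx
    have h := hf.deriv_le_slope (x := x) (y := x + 1) hx (by simp; linarith) (by linarith)
      (hdiffAt hx)
    simpa [slope_def_field] using h

theorem eventually_lt_of_eventually_lt_add_one {F : ℝ → ℝ} {c : ℝ} (hlim : Tendsto F atTop (𝓝 c))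
    (hlt : ∀ᶠ x in atTop, F x < F (x + 1)) : ∀ᶠ x in atTop, F x < c := by
  obtain ⟨X, hX⟩ := eventually_atTop.1 hlt
  filter_upwards [eventually_ge_atTop X] with x hx
  have hmono : StrictMono fun n : ℕ ↦ F (x + n) := strictMono_nat_of_lt_succ fun n ↦ by
    simpa [add_assoc] using hX (x + n) (le_add_of_le_of_nonneg hx n.cast_nonneg)
  have hle := hmono.monotone.ge_of_tendsto
    (hlim.comp (tendsto_atTop_add_const_left _ x tendsto_natCast_atTop_atTop)) 1
  have hstep := hmono zero_lt_one
  simp only [Nat.cast_zero, add_zero] at hstep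
  exact hstep.trans_le hle

theorem contDiffAt_real_Gamma {x : ℝ} (hx : 0 < x) {n : ℕ∞} : ContDiffAt ℝ n Real.Gamma x := by
  have hdiff : DifferentiableOn ℂ Complex.Gamma {z | 0 < z.re} := fun z hz ↦
    (Complex.differentiableAt_Gamma z fun m hm ↦
      (Nat.cast_nonneg m).not_gt (by simpa [hm] using hz)).differentiableWithinAt
  have hanalytic : AnalyticAt ℂ Complex.Gamma x :=
    hdiff.analyticAt <|
      (isOpen_lt continuous_const Complex.continuous_re).mem_nhds (by simpa using hx)
  exact hanalytic.contDiffAt.real_of_complex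

theorem differentiableOn_digamma : DifferentiableOn ℝ digamma (Ioi 0) := by
  have hGamma : ContDiffOn ℝ 2 Real.Gamma (Ioi 0) := fun x hx ↦
    (contDiffAt_real_Gamma hx (n := 2)).contDiffWithinAt
  exact ((hGamma.deriv_of_isOpen (m := 1) isOpen_Ioi (by norm_num)).differentiableOn (by simp)).div
    Real.differentiableOn_Gamma_Ioi fun x hx ↦ (Real.Gamma_pos_of_pos hx).ne'

theorem differentiableAt_digamma {x : ℝ} (hx : 0 < x) : DifferentiableAt ℝ digamma x :=
  differentiableOn_digamma.differentiableAt (Ioi_mem_nhds hx)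

theorem monotoneOn_digamma : MonotoneOn digamma (Ioi 0) := by
  have hderiv : EqOn (deriv (Real.log ∘ Real.Gamma)) digamma (Ioi 0) := fun x hx ↦
    ((Real.differentiableOn_Gamma_Ioi.differentiableAt (Ioi_mem_nhds hx)).hasDerivAt.log
      (Real.Gamma_pos_of_pos hx).ne').deriv
  refine (Real.convexOn_log_Gamma.monotoneOn_deriv fun x hx ↦ ?_).congr hderiv
  exact (Real.differentiableOn_Gamma_Ioi.differentiableAt (Ioi_mem_nhds hx)).log
    (Real.Gamma_pos_of_pos hx).ne'

theorem digamma_add_one {x : ℝ} (hx : 0 < x) : digamma (x + 1) = digamma x + x⁻¹ := by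
  have hGamma := (Real.differentiableOn_Gamma_Ioi.differentiableAt (Ioi_mem_nhds hx)).hasDerivAt
  have hderiv : deriv Real.Gamma (x + 1) = Real.Gamma x + x * deriv Real.Gamma x := by
    have hrec : (fun y : ℝ ↦ Real.Gamma (y + 1)) =ᶠ[𝓝 x] fun y ↦ y * Real.Gamma y := by
      filter_upwards [Ioi_mem_nhds hx] with y hy using Real.Gamma_add_one (ne_of_gt hy)
    rw [← deriv_comp_add_const, hrec.deriv_eq, ((hasDerivAt_id' x).fun_mul hGamma).deriv, one_mul]
  have := (Real.Gamma_pos_of_pos hx).ne'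
  rw [digamma, digamma, hderiv, Real.Gamma_add_one hx.ne']
  field_simp
  ring

theorem tendsto_digamma_add_natCast_sub_digamma (m : ℕ) :
    Tendsto (fun x ↦ digamma (x + m) - digamma x) atTop (𝓝 0) := by
  induction m with
  | zero => simp
  | succ m ih =>
    have hinv : Tendsto (fun x : ℝ ↦ (x + m)⁻¹) atTop (𝓝 0) :=
      tendsto_inv_atTop_zero.comp (tendsto_atTop_add_const_right _ _ tendsto_id)
    have hsum := ih.add hinv
    rw [add_zero] at hsum
    refine hsum.congr' ?_
    filter_upwards [eventually_gt_atTop 0] with x hx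
    rw [Nat.cast_succ, ← add_assoc, digamma_add_one (by positivity)]
    ring

theorem tendsto_digamma_add_sub_digamma {a : ℝ} (ha : 0 ≤ a) :
    Tendsto (fun x ↦ digamma (x + a) - digamma x) atTop (𝓝 0) := by
  obtain ⟨m, ham⟩ := exists_nat_ge a
  refine tendsto_of_tendsto_of_tendsto_of_le_of_le' tendsto_const_nhds
    (tendsto_digamma_add_natCast_sub_digamma m) ?_ ?_
  all_goals
    filter_upwards [eventually_gt_atTop 0] with x hx
    have hxa : 0 < x + a := by positivity
  · exact sub_nonneg.2 (monotoneOn_digamma hx hxa (by linarith))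
  · exact sub_le_sub_right (monotoneOn_digamma hxa (show 0 < x + m by positivity) (by gcongr)) _

theorem completelyMonotonicOn_digamma_add_sub_digamma {a : ℝ} (ha : 0 ≤ a) :
    CompletelyMonotonicOn (fun x ↦ digamma (x + a) - digamma x) (Ioi 0) := by
  refine .of_sub_shift (tendsto_digamma_add_sub_digamma ha) ?_
  refine ((CompletelyMonotonicOn.inv_Ioi.mul (uniqueDiffOn_Ioi 0)
    (.inv_add_Ioi ha)).const_mul ha).congr fun x hx ↦ ?_
  have hx : 0 < x := hx
  have hxa : 0 < x + a := by positivity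
  simp only [add_right_comm x 1 a, digamma_add_one hx, digamma_add_one hxa]
  field_simp
  ring

theorem antitoneOn_deriv_digamma : AntitoneOn (deriv digamma) (Ioi 0) := by
  intro x hx y hy hxy
  have hshift := (completelyMonotonicOn_digamma_add_sub_digamma (sub_nonneg.2 hxy)).neg_deriv
    isOpen_Ioi |>.nonneg hx
  have hy' : HasDerivAt digamma (deriv digamma y) (x + (y - x)) := by
    simpa only [add_sub_cancel] using (differentiableAt_digamma hy).hasDerivAt
  rw [((hy'.comp_add_const x _).fun_sub (differentiableAt_digamma hx).hasDerivAt).deriv] at hshift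
  linarith

theorem tendsto_deriv_digamma : Tendsto (deriv digamma) atTop (𝓝 0) := by
  have hconcave : ConcaveOn ℝ (Ioi 0) digamma :=
    AntitoneOn.concaveOn_of_deriv (convex_Ioi 0) differentiableOn_digamma.continuousOn
      (differentiableOn_digamma.mono interior_subset)
      (antitoneOn_deriv_digamma.mono interior_subset)
  have hstep : Tendsto (fun x ↦ (-digamma) (x + 1) - (-digamma) x) atTop (𝓝 0) := by
    simpa [neg_add_eq_sub] using (tendsto_digamma_add_sub_digamma zero_le_one).neg
  have hneg := tendsto_deriv_atTop_of_convexOn hconcave.neg differentiableOn_digamma.neg hstep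
  simpa [deriv.neg'] using hneg.neg

theorem deriv_digamma_add_one {x : ℝ} (hx : 0 < x) :
    deriv digamma (x + 1) = deriv digamma x - x⁻¹ ^ 2 := by
  have hrec : (fun y ↦ digamma (y + 1)) =ᶠ[𝓝 x] fun y ↦ digamma y + y⁻¹ := by
    filter_upwards [Ioi_mem_nhds hx] with y hy using digamma_add_one hy
  rw [← deriv_comp_add_const, hrec.deriv_eq,
    ((differentiableAt_digamma hx).hasDerivAt.fun_add (hasDerivAt_inv hx.ne')).deriv, inv_pow,
    sub_eq_add_neg]

theorem completelyMonotonicOn_deriv_digamma :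
    CompletelyMonotonicOn (deriv digamma) (Ioi 0) := by
  refine .of_sub_shift tendsto_deriv_digamma ?_
  refine (CompletelyMonotonicOn.inv_Ioi.pow (uniqueDiffOn_Ioi 0) 2).congr fun x hx ↦ ?_
  simp only [deriv_digamma_add_one (mem_Ioi.1 hx), sub_sub_cancel]

theorem deriv_deriv_digamma_add_one {x : ℝ} (hx : 0 < x) :
    deriv (deriv digamma) (x + 1) = deriv (deriv digamma) x + 2 * x⁻¹ ^ 3 := by
  have hrec : (fun y ↦ deriv digamma (y + 1)) =ᶠ[𝓝 x] fun y ↦ deriv digamma y - y⁻¹ ^ 2 := by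
    filter_upwards [Ioi_mem_nhds hx] with y hy using deriv_digamma_add_one hy
  have hdiff := completelyMonotonicOn_deriv_digamma.differentiableAt isOpen_Ioi hx
  rw [← deriv_comp_add_const, hrec.deriv_eq,
    (hdiff.hasDerivAt.fun_sub ((hasDerivAt_inv hx.ne').fun_pow 2)).deriv]
  simp only [Nat.cast_ofNat, Nat.add_one_sub_one, pow_one]
  ring

theorem tendsto_deriv_deriv_digamma : Tendsto (deriv (deriv digamma)) atTop (𝓝 0) := by
  have hcm := completelyMonotonicOn_deriv_digamma
  refine tendsto_deriv_atTop_of_convexOn (hcm.convexOn isOpen_Ioi (convex_Ioi 0))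
    (fun x hx ↦ (hcm.differentiableAt isOpen_Ioi hx).differentiableWithinAt) ?_
  simpa using (tendsto_deriv_digamma.comp
    (tendsto_atTop_add_const_right _ 1 tendsto_id)).sub tendsto_deriv_digamma

section PolygammaGap

variable {lam x : ℝ}

/-- The rational function `R_λ` in `f_λ = (ψ')² + ψ'' - R_λ`. -/
noncomputable def rationalPart (lam x : ℝ) : ℝ :=
  (x ^ 2 + lam * x + 12) / (12 * x ^ 4 * (x + 1) ^ 2)

/-- The function `-f_λ`. -/
noncomputable def polygammaGap (lam x : ℝ) : ℝ :=
  -(deriv digamma x ^ 2 + deriv (deriv digamma) x - rationalPart lam x)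

/-- `x² / 2 * (f_λ(x + 1) - f_λ(x))`, expanded with the recurrences of `ψ'` and `ψ''`: up to the
completely monotonic factor `2 / x²` it is the first difference of `-f_λ`. Since `ψ'` enters
linearly and `ψ''` not at all, its own first difference is a rational function. -/
noncomputable def polygammaGapStep (lam x : ℝ) : ℝ :=
  x ^ 2 / 2 * (rationalPart lam x - rationalPart lam (x + 1)) + x⁻¹ + x⁻¹ ^ 2 / 2
    - deriv digamma x

theorem polygammaGap_sub_add_one (lam : ℝ) (hx : 0 < x) :
    polygammaGap lam x - polygammaGap lam (x + 1) =
      2 * (x⁻¹ ^ 2 * polygammaGapStep lam x) := by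
  simp only [polygammaGap, polygammaGapStep, deriv_digamma_add_one hx,
    deriv_deriv_digamma_add_one hx]
  field_simp
  ring

theorem polygammaGapStep_sub_add_one (lam : ℝ) (hx : 0 < x) :
    polygammaGapStep lam x - polygammaGapStep lam (x + 1) =
      (4 * (144 + 561 * x + 927 * x ^ 2 + 736 * x ^ 3 + 279 * x ^ 4 + 41 * x ^ 5) +
        (lam - 4) * (144 + 638 * x + 1181 * x ^ 2 + 1155 * x ^ 3 + 623 * x ^ 4 + 175 * x ^ 5 +
          20 * x ^ 6)) / (24 * x * (x + 1) ^ 4 * (x + 2) ^ 4 * (x + 3) ^ 2) := by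
  have h1 : x + 1 ≠ 0 := by positivity
  have h2 : x + 2 ≠ 0 := by positivity
  have h3 : x + 3 ≠ 0 := by positivity
  simp only [polygammaGapStep, rationalPart, deriv_digamma_add_one hx,
    show x + 1 + 1 = x + 2 by ring, show x + 2 + 1 = x + 3 by ring]
  field_simp
  ring

theorem tendsto_sq_mul_rationalPart (lam : ℝ) :
    Tendsto (fun x ↦ x ^ 2 * rationalPart lam x) atTop (𝓝 0) := by
  have hinv := tendsto_inv_atTop_zero (𝕜 := ℝ)
  have hinv' : Tendsto (fun x : ℝ ↦ (x + 1)⁻¹) atTop (𝓝 0) :=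
    hinv.comp (tendsto_atTop_add_const_right _ _ tendsto_id)
  have hprod : Tendsto (fun x : ℝ ↦ (1 + lam * x⁻¹ + 12 * x⁻¹ ^ 2) / 12 * (x + 1)⁻¹ ^ 2) atTop
      (𝓝 ((1 + lam * 0 + 12 * 0 ^ 2) / 12 * 0 ^ 2)) :=
    ((((hinv.const_mul lam).const_add 1).add ((hinv.pow 2).const_mul 12)).div_const 12).mul
      (hinv'.pow 2)
  rw [zero_pow two_ne_zero, mul_zero] at hprod
  refine hprod.congr' ?_
  filter_upwards [eventually_gt_atTop 0] with x hx
  rw [rationalPart]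
  field_simp

theorem tendsto_sq_mul_rationalPart_add_one (lam : ℝ) :
    Tendsto (fun x ↦ x ^ 2 * rationalPart lam (x + 1)) atTop (𝓝 0) := by
  have hshift : Tendsto (fun x ↦ (x + 1) ^ 2 * rationalPart lam (x + 1)) atTop (𝓝 0) :=
    (tendsto_sq_mul_rationalPart lam).comp (tendsto_atTop_add_const_right _ 1 tendsto_id)
  refine squeeze_zero_norm' ?_ (tendsto_zero_iff_norm_tendsto_zero.1 hshift)
  filter_upwards [eventually_ge_atTop 0] with x hx
  rw [norm_mul, norm_mul, norm_pow, norm_pow, Real.norm_of_nonneg hx,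
    Real.norm_of_nonneg (by positivity : 0 ≤ x + 1)]
  gcongr
  linarith

theorem tendsto_rationalPart (lam : ℝ) : Tendsto (rationalPart lam) atTop (𝓝 0) := by
  have h := (tendsto_inv_atTop_zero (𝕜 := ℝ).pow 2).mul (tendsto_sq_mul_rationalPart lam)
  rw [mul_zero] at h
  refine h.congr' ?_
  filter_upwards [eventually_gt_atTop 0] with x hx
  field_simp

theorem tendsto_polygammaGapStep (lam : ℝ) : Tendsto (polygammaGapStep lam) atTop (𝓝 0) := by
  have hrat := ((tendsto_sq_mul_rationalPart lam).sub
    (tendsto_sq_mul_rationalPart_add_one lam)).div_const 2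
  have hinv := tendsto_inv_atTop_zero (𝕜 := ℝ)
  have h := ((hrat.add hinv).add ((hinv.pow 2).div_const 2)).sub tendsto_deriv_digamma
  rw [show ((0 - 0) / 2 + 0 + 0 ^ 2 / 2 - 0 : ℝ) = 0 by norm_num] at h
  refine h.congr fun x ↦ ?_
  rw [polygammaGapStep]
  ring

theorem tendsto_polygammaGap (lam : ℝ) : Tendsto (polygammaGap lam) atTop (𝓝 0) := by
  have h := (((tendsto_deriv_digamma.pow 2).add tendsto_deriv_deriv_digamma).sub
    (tendsto_rationalPart lam)).neg
  rwa [show (-(0 ^ 2 + 0 - 0) : ℝ) = 0 by norm_num] at h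

theorem completelyMonotonicOn_polygammaGapStep_four :
    CompletelyMonotonicOn (polygammaGapStep 4) (Ioi 0) := by
  refine .of_sub_shift (tendsto_polygammaGapStep 4) ?_
  have hs := uniqueDiffOn_Ioi (0 : ℝ)
  have hinv_add {b : ℝ} (hb : 0 ≤ b) (n : ℕ) :
      CompletelyMonotonicOn (fun x ↦ (x + b)⁻¹ ^ n) (Ioi 0) :=
    (CompletelyMonotonicOn.inv_add_Ioi hb).pow hs n
  have hfactor : CompletelyMonotonicOn (fun x ↦ 1 / 24 * ((x + 2)⁻¹ ^ 4 * (x + 3)⁻¹ ^ 2)) (Ioi 0) :=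
    ((hinv_add zero_le_two 4).mul hs (hinv_add zero_le_three 2)).const_mul (by norm_num)
  -- The remaining factor has nonnegative coefficients once expanded in powers of `(x + 1)⁻¹`.
  have hexpansion : CompletelyMonotonicOn (fun x ↦ 576 * (x⁻¹ * (x + 1)⁻¹ ^ 4) +
      528 * (x + 1)⁻¹ ^ 4 + 512 * (x + 1)⁻¹ ^ 3 + 580 * (x + 1)⁻¹ ^ 2 + 460 * (x + 1)⁻¹ ^ 1 + 164)
      (Ioi 0) := by
    refine .add hs (.add hs (.add hs (.add hs (.add hs ?_ ?_) ?_) ?_) ?_) (.const (by norm_num))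
    · exact (CompletelyMonotonicOn.inv_Ioi.mul hs (hinv_add zero_le_one 4)).const_mul (by norm_num)
    all_goals exact (hinv_add zero_le_one _).const_mul (by norm_num)
  refine (hfactor.mul hs hexpansion).congr fun x hx ↦ ?_
  have hx : 0 < x := hx
  simp only [polygammaGapStep_sub_add_one 4 hx]
  field_simp
  ring

theorem completelyMonotonicOn_polygammaGap_four :
    CompletelyMonotonicOn (polygammaGap 4) (Ioi 0) := by
  refine .of_sub_shift (tendsto_polygammaGap 4) ?_
  have hs := uniqueDiffOn_Ioi (0 : ℝ)
  have hsq := CompletelyMonotonicOn.inv_Ioi.pow hs 2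
  exact ((hsq.mul hs completelyMonotonicOn_polygammaGapStep_four).const_mul zero_le_two).congr
    fun x hx ↦ polygammaGap_sub_add_one 4 hx

theorem polygammaGap_eq_polygammaGap_four_add (lam : ℝ) (hx : 0 < x) :
    polygammaGap lam x = polygammaGap 4 x + (lam - 4) / 12 * (x⁻¹ ^ 3 * (x + 1)⁻¹ ^ 2) := by
  simp only [polygammaGap, rationalPart]
  field_simp
  ring

theorem completelyMonotonicOn_polygammaGap (hlam : 4 ≤ lam) :
    CompletelyMonotonicOn (polygammaGap lam) (Ioi 0) := by
  have hs := uniqueDiffOn_Ioi (0 : ℝ)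
  have hmul := ((CompletelyMonotonicOn.inv_Ioi.pow hs 3).mul hs
    ((CompletelyMonotonicOn.inv_add_Ioi zero_le_one).pow hs 2)).const_mul
    (div_nonneg (sub_nonneg.2 hlam) (by norm_num : (0 : ℝ) ≤ 12))
  exact (completelyMonotonicOn_polygammaGap_four.add hs hmul).congr fun x hx ↦
    polygammaGap_eq_polygammaGap_four_add lam hx

theorem eventually_polygammaGapStep_lt_add_one (hlam : lam < 4) :
    ∀ᶠ x in atTop, polygammaGapStep lam x < polygammaGapStep lam (x + 1) := by
  -- The numerator of the difference is `x ^ 6 * p x⁻¹`, with leading coefficient `p 0`.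
  let p : ℝ → ℝ := fun u ↦
    4 * (144 * u ^ 6 + 561 * u ^ 5 + 927 * u ^ 4 + 736 * u ^ 3 + 279 * u ^ 2 + 41 * u) +
      (lam - 4) * (144 * u ^ 6 + 638 * u ^ 5 + 1181 * u ^ 4 + 1155 * u ^ 3 + 623 * u ^ 2 +
        175 * u + 20)
  have hp : Tendsto (fun x : ℝ ↦ p x⁻¹) atTop (𝓝 (p 0)) :=
    ((by fun_prop : Continuous p).tendsto 0).comp tendsto_inv_atTop_zero
  have hp0 : p 0 < 0 := by norm_num [p]; linarith
  filter_upwards [hp.eventually_lt_const hp0, eventually_gt_atTop 0] with x hpx hx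
  have hdiff : polygammaGapStep lam x - polygammaGapStep lam (x + 1) =
      x ^ 6 * p x⁻¹ / (24 * x * (x + 1) ^ 4 * (x + 2) ^ 4 * (x + 3) ^ 2) := by
    rw [polygammaGapStep_sub_add_one lam hx]
    simp only [p]
    field_simp
  rw [← sub_neg, hdiff]
  exact div_neg_of_neg_of_pos (mul_neg_of_pos_of_neg (by positivity) hpx) (by positivity)

theorem eventually_polygammaGap_neg (hlam : lam < 4) : ∀ᶠ x in atTop, polygammaGap lam x < 0 := by
  refine eventually_lt_of_eventually_lt_add_one (tendsto_polygammaGap lam) ?_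
  filter_upwards [eventually_lt_of_eventually_lt_add_one (tendsto_polygammaGapStep lam)
    (eventually_polygammaGapStep_lt_add_one hlam), eventually_gt_atTop 0] with x hstep hx
  rw [← sub_neg, polygammaGap_sub_add_one lam hx]
  exact mul_neg_of_pos_of_neg two_pos (mul_neg_of_pos_of_neg (by positivity) hstep)

end PolygammaGap

theorem stmt_1 (lam : ℝ) :
    CompletelyMonotonicOn
      (fun x : ℝ => -((deriv digamma x) ^ 2 + deriv (deriv digamma) x -
        (x ^ 2 + lam * x + 12) / (12 * x ^ 4 * (x + 1) ^ 2)))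
      (Set.Ioi 0) ↔ 4 ≤ lam := by
  change CompletelyMonotonicOn (polygammaGap lam) (Ioi 0) ↔ 4 ≤ lam
  refine ⟨fun h ↦ ?_, completelyMonotonicOn_polygammaGap⟩
  by_contra! hlam
  obtain ⟨x, hneg, hx⟩ :=
    ((eventually_polygammaGap_neg hlam).and (eventually_gt_atTop 0)).exists
  exact hneg.not_ge (h.nonneg hx)
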